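/- For every integer r ≥ 55, one has r − π(r) > (p_{r+1} / log p_{r+1}) · log 2, where p_n denotes the n-th prime, π is the prime-counting function, and log denotes the natural logarithm. -/

import Mathlib

/-!
Write `n = p_{r+1}`, so that `r` is the number of primes below `n`; the claim is
`n log 2 < (r - π(r)) log n`. For large `n`, Chebyshev's argument with
`n! (n/30)! / ((n/2)! (n/3)! (n/5)!)` gives `r log n ≥ ψ(n) - log n ≥ A n - O(log n)` with
`A > 0.9212`, while sieving by `210 = 2·3·5·7`, of which `φ(210) = 48` residues survive, gives
`π(r) ≤ 0.24 r - 3`. As `0.76 A > 0.7 > log 2`, this settles `n ≥ 1400`. Below that, `r - π(r)` and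
`n` are compared at the endpoints of a few intervals, which suffices by monotonicity.
-/

section

open Finset
open Real (log)
open scoped Nat Nat.Prime Chebyshev ArithmeticFunction.vonMangoldt

theorem log_factorial_le {n : ℕ} (hn : n ≠ 0) :
    log n ! ≤ n * log n - n + log n / 2 + 1 := by
  obtain ⟨k, rfl⟩ := Nat.exists_eq_succ_of_ne_zero hn
  have log_stirlingSeq_le := Stirling.log_stirlingSeq'_antitone (Nat.zero_le k)
  simp only [Function.comp_apply, Stirling.log_stirlingSeq_formula, Nat.succ_eq_add_one,
    zero_add, Nat.factorial_one, Nat.cast_one, Real.log_one, mul_one, one_mul] at log_stirlingSeq_le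
  rw [Real.log_mul (by norm_num) (by positivity), Real.log_div (by positivity) (by positivity),
    Real.log_div one_ne_zero (by positivity), Real.log_exp, Real.log_one] at log_stirlingSeq_le
  linarith

theorem log_factorial_div_le {n k : ℕ} (hn : n ≠ 0) (hk : k ∣ n) :
    log (n / k)! ≤ n / k * (log n - log k) - n / k + (log n - log k) / 2 + 1 := by
  have hk0 : (k : ℝ) ≠ 0 := mod_cast ne_zero_of_dvd_ne_zero hn hk
  rw [← Real.log_div (mod_cast hn) hk0, ← Nat.cast_div hk hk0]
  exact log_factorial_le ((Nat.div_ne_zero_iff_of_dvd hk).2 ⟨hn, mod_cast hk0⟩)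

theorem le_log_factorial_div {n k : ℕ} (hn : n ≠ 0) (hk : k ∣ n) :
    n / k * (log n - log k) - n / k + (log n - log k) / 2 + log (2 * Real.pi) / 2
      ≤ log (n / k)! := by
  have hk0 : (k : ℝ) ≠ 0 := mod_cast ne_zero_of_dvd_ne_zero hn hk
  rw [← Real.log_div (mod_cast hn) hk0, ← Nat.cast_div hk hk0]
  exact Stirling.le_log_factorial_stirling ((Nat.div_ne_zero_iff_of_dvd hk).2 ⟨hn, mod_cast hk0⟩)

theorem log_factorial_eq_sum_vonMangoldt (n : ℕ) :
    log n ! = ∑ d ∈ Ioc 0 n, Λ d * (n / d : ℕ) := by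
  have log_factorial_eq_sum_log : log n ! = ∑ k ∈ Ioc 0 n, log k := by
    induction n with
    | zero => simp
    | succ n ih =>
      rw [Nat.factorial_succ, Nat.cast_mul, Real.log_mul (by positivity) (by positivity), ih,
        sum_Ioc_succ_top (Nat.zero_le n), add_comm]
  rw [log_factorial_eq_sum_log, ← ArithmeticFunction.sum_Ioc_mul_zeta_eq_sum,
    ArithmeticFunction.vonMangoldt_mul_zeta]
  rfl

theorem log_factorial_div_eq_sum_vonMangoldt (n k : ℕ) :
    log (n / k)! = ∑ d ∈ Ioc 0 n, Λ d * (n / d / k : ℕ) := by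
  rw [log_factorial_eq_sum_vonMangoldt]
  simp only [Nat.div_right_comm n k]
  refine sum_subset (Ioc_subset_Ioc_right (Nat.div_le_self n k)) fun d hd hd' => ?_
  have lt_d : n / k < d := by simp only [mem_Ioc] at hd hd'; omega
  rw [Nat.div_right_comm, Nat.div_eq_of_lt lt_d, Nat.cast_zero, mul_zero]

theorem log_factorial_add_sub_le_psi (n : ℕ) :
    log n ! + log (n / 30)! - log (n / 2)! - log (n / 3)! - log (n / 5)! ≤ ψ n := by
  rw [log_factorial_eq_sum_vonMangoldt n]
  simp only [log_factorial_div_eq_sum_vonMangoldt n, Chebyshev.psi, Nat.floor_natCast,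
    ← sum_add_distrib, ← sum_sub_distrib, ← mul_add, ← mul_sub]
  refine sum_le_sum fun d _ => mul_le_of_le_one_right ArithmeticFunction.vonMangoldt_nonneg ?_
  have floor_le : n / d + n / d / 30 ≤ n / d / 2 + n / d / 3 + n / d / 5 + 1 := by omega
  have floor_le_real : ((n / d : ℕ) + (n / d / 30 : ℕ) : ℝ) ≤
      (n / d / 2 : ℕ) + (n / d / 3 : ℕ) + (n / d / 5 : ℕ) + 1 := mod_cast floor_le
  linarith

theorem log_thirty : log 30 = log 2 + log 3 + log 5 := by
  rw [← Real.log_mul (by norm_num) (by norm_num), ← Real.log_mul (by norm_num) (by norm_num)]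
  norm_num

/-- Chebyshev's constant `A = 0.92129…`, the growth rate of
`log (n! (n/30)! / ((n/2)! (n/3)! (n/5)!)) / n`. -/
noncomputable def chebyshevConst : ℝ :=
  log 2 / 2 + log 3 / 3 + log 5 / 5 - log 30 / 30

theorem lt_chebyshevConst : 0.9212 < chebyshevConst := by
  rw [chebyshevConst, log_thirty]
  linarith [Real.log_two_gt_d9, Real.log_three_gt_d9, Real.log_five_gt_d9]

theorem chebyshevConst_mul_sub_le_psi_of_thirty_dvd {n : ℕ} (hn : n ≠ 0) (h30 : 30 ∣ n) :
    chebyshevConst * n - log n / 2 - 2 ≤ ψ n := by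
  have chebyshev := log_factorial_add_sub_le_psi n
  have lower_one := Stirling.le_log_factorial_stirling hn
  have lower_thirty := le_log_factorial_div hn h30
  have upper_two := log_factorial_div_le hn (dvd_trans (by norm_num : 2 ∣ 30) h30)
  have upper_three := log_factorial_div_le hn (dvd_trans (by norm_num : 3 ∣ 30) h30)
  have upper_five := log_factorial_div_le hn (dvd_trans (by norm_num : 5 ∣ 30) h30)
  have one_le_log_two_pi : 1 ≤ log (2 * Real.pi) := by
    rw [Real.le_log_iff_exp_le (by positivity)]
    linarith [Real.exp_one_lt_three, Real.pi_gt_three]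
  push_cast at lower_thirty upper_two upper_three upper_five
  rw [chebyshevConst]
  linarith [log_thirty]

theorem chebyshevConst_mul_sub_le_psi {n : ℕ} (hn : 30 ≤ n) :
    chebyshevConst * (n - 29) - log n / 2 - 2 ≤ ψ n := by
  set m := 30 * (n / 30)
  have hm0 : m ≠ 0 := by omega
  have m_le : (m : ℝ) ≤ n := mod_cast Nat.mul_div_le n 30
  have sub_le_m : (n : ℝ) - 29 ≤ m := by
    rw [sub_le_iff_le_add]
    exact_mod_cast (by omega : n ≤ m + 29)
  have chebyshevConst_pos : 0 < chebyshevConst := lt_trans (by norm_num) lt_chebyshevConst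
  calc chebyshevConst * (n - 29) - log n / 2 - 2 ≤ chebyshevConst * m - log m / 2 - 2 := by gcongr
    _ ≤ ψ m := chebyshevConst_mul_sub_le_psi_of_thirty_dvd hm0 (Dvd.intro _ rfl)
    _ ≤ ψ n := Chebyshev.psi_mono m_le

theorem prime_iff_coprime_factorial {m n : ℕ} (h : n < (m + 1) ^ 2) :
    n.Prime ↔ 2 ≤ n ∧ n.Coprime (min m (n - 1))! := by
  refine ⟨fun hn => ⟨hn.two_le, hn.coprime_factorial_of_lt ?_⟩, fun ⟨two_le, coprime⟩ => ?_⟩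
  · have := hn.pos
    omega
  by_contra not_prime
  have minFac_le : n.minFac ≤ m := by
    have minFac_sq_lt := (Nat.minFac_sq_le_self (by omega) not_prime).trans_lt h
    exact Nat.lt_succ_iff.1 (lt_of_pow_lt_pow_left₀ 2 (by positivity) minFac_sq_lt)
  have minFac_lt : n.minFac < n := (Nat.not_prime_iff_minFac_lt two_le).1 not_prime
  have lt_minFac := (Nat.coprime_factorial_iff (by omega)).1 coprime
  omega

/-- The number of `2 ≤ k < n` that no prime `p ≤ m` with `p < k` divides, so `π' n` as long as
`n ≤ (m + 1) ^ 2`. Testing divisibility through one `gcd` with a factorial makes this far faster to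
evaluate in the kernel than `π' n` itself. -/
def sieveCount (m n : ℕ) : ℕ :=
  Nat.count (fun k => 2 ≤ k ∧ k.Coprime (min m (k - 1))!) n

theorem sieveCount_eq_primeCounting' {m n : ℕ} (h : n ≤ (m + 1) ^ 2) :
    sieveCount m n = π' n := by
  simp only [sieveCount, Nat.primeCounting', Nat.count_eq_card_filter_range]
  congr 1
  exact filter_congr fun k hk =>
    (prime_iff_coprime_factorial ((mem_range.1 hk).trans_le h)).symm

theorem primeCounting_add_le_add (n k : ℕ) : π (n + k) ≤ π n + k := by
  rw [Nat.primeCounting, Nat.primeCounting', Nat.add_right_comm, Nat.count_add]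
  exact Nat.add_le_add_left (Nat.count_le _) _

theorem primeCounting_le_self (n : ℕ) : π n ≤ n := by
  simpa using primeCounting_add_le_add 0 n

theorem primeCounting_le_primeCounting'_add_one (n : ℕ) : π n ≤ π' n + 1 := by
  rw [Nat.primeCounting, Nat.primeCounting', Nat.count_succ]
  split_ifs <;> omega

theorem monotone_sub_primeCounting : Monotone fun n : ℕ => (n : ℝ) - π n :=
  monotone_nat_of_le_succ fun n => by
    have step : (π (n + 1) : ℝ) ≤ π n + 1 := mod_cast primeCounting_add_le_add n 1
    push_cast
    linarith

theorem primeCounting_add_le_totient {a n : ℕ} (ha : a ≠ 0) (han : a ≤ n) :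
    π (n + a) ≤ π n + a.totient := by
  simp only [← Nat.primesLE_card_eq_primeCounting, ← Nat.filter_coprime_Ico_eq_totient a (n + 1)]
  refine (card_le_card fun p hp => ?_).trans (card_union_le _ _)
  simp only [mem_union, mem_filter, mem_Ico, Nat.mem_primesLE] at hp ⊢
  by_cases hpn : p ≤ n
  · exact Or.inl ⟨hpn, hp.2⟩
  · exact Or.inr ⟨by omega, (Nat.coprime_of_lt_prime ha (by omega) hp.2).symm⟩

theorem mul_primeCounting_add_le_mul {r : ℕ} (hr : 210 ≤ r) : 25 * π r + 75 ≤ 6 * r := by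
  induction r using Nat.strong_induction_on with
  | h r ih =>
    by_cases hr' : r < 420
    · have sieve : ∀ r < 420, 210 ≤ r → 25 * sieveCount 37 (r + 1) + 75 ≤ 6 * r := by
        decide +kernel
      have sieve_r := sieve r hr' hr
      rwa [sieveCount_eq_primeCounting' (by omega)] at sieve_r
    · obtain ⟨k, rfl⟩ := Nat.exists_eq_add_of_le' hr
      have step : π (k + 210) ≤ π k + 48 :=
        primeCounting_add_le_totient (a := 210) (by norm_num) (by omega)
      have := ih k (by omega) (by omega)
      omega

theorem mul_log_two_lt_of_two_pow_lt {a b n : ℕ} (han : a ≤ n) (hnb : n ≤ b)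
    (hpow : 2 ^ b < a ^ (π' a - π (π' a))) :
    n * log 2 < (π' n - π (π' n)) * log n := by
  have ha : 0 < a := by
    by_contra! ha
    obtain rfl : a = 0 := by omega
    exact hpow.not_ge (by simpa [Nat.primeCounting'] using Nat.one_le_two_pow)
  have hlog : b * log 2 < (π' a - π (π' a)) * log a := by
    have hpow_real : (2 : ℝ) ^ b < (a : ℝ) ^ (π' a - π (π' a)) := mod_cast hpow
    have := Real.log_lt_log (by positivity) hpow_real
    rwa [Real.log_pow, Real.log_pow, Nat.cast_sub (primeCounting_le_self _)] at this
  have sub_le : (π' a - π (π' a) : ℝ) ≤ π' n - π (π' n) :=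
    monotone_sub_primeCounting (Nat.monotone_primeCounting' han)
  have sub_nonneg : (0 : ℝ) ≤ π' n - π (π' n) :=
    sub_nonneg.2 (mod_cast primeCounting_le_self (π' n))
  calc n * log 2 ≤ b * log 2 := by gcongr
    _ < (π' a - π (π' a)) * log a := hlog
    _ ≤ (π' n - π (π' n)) * log n := by gcongr

/-- Intervals covering `[72, 1400)`, each as long as the criterion `mul_log_two_lt_of_two_pow_lt`
allows when it is to end at a prime. -/
def criterionIntervals : List (ℕ × ℕ) :=
  [(72, 73), (74, 79), (80, 83), (84, 89), (90, 97), (98, 103), (104, 113), (114, 131), (132, 139),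
    (140, 163), (164, 191), (192, 211), (212, 241), (242, 283), (284, 349), (350, 431), (432, 523),
    (524, 661), (662, 839), (840, 1087), (1088, 1399)]

theorem exists_mem_criterionIntervals {n : ℕ} (hn : 72 ≤ n) (hn' : n < 1400) :
    ∃ I ∈ criterionIntervals, I.1 ≤ n ∧ n ≤ I.2 := by
  simp only [criterionIntervals, List.mem_cons, List.not_mem_nil, or_false, exists_eq_or_imp,
    exists_eq_left]
  omega

theorem two_pow_lt_of_mem_criterionIntervals {I : ℕ × ℕ} (hI : I ∈ criterionIntervals) :
    2 ^ I.2 < I.1 ^ (π' I.1 - π (π' I.1)) := by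
  have sieve : ∀ I ∈ criterionIntervals, I.1 < 1400 ∧
      2 ^ I.2 < I.1 ^ (sieveCount 37 I.1 - sieveCount 37 (sieveCount 37 I.1 + 1)) := by
    decide +kernel
  obtain ⟨lt_1400, two_pow_lt⟩ := sieve I hI
  rwa [sieveCount_eq_primeCounting' (by omega), sieveCount_eq_primeCounting' ?_] at two_pow_lt
  have := Nat.count_le Nat.Prime (n := I.1)
  rw [Nat.primeCounting']
  omega

theorem mul_log_two_lt_of_lt {n : ℕ} (hn : 72 ≤ n) (hn' : n < 1400) :
    n * log 2 < (π' n - π (π' n)) * log n := by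
  obtain ⟨I, hI, le_n, n_le⟩ := exists_mem_criterionIntervals hn hn'
  exact mul_log_two_lt_of_two_pow_lt le_n n_le (two_pow_lt_of_mem_criterionIntervals hI)

theorem mul_log_two_lt_of_ge {n : ℕ} (hn : 1400 ≤ n) :
    n * log 2 < (π' n - π (π' n)) * log n := by
  have hn' : (1400 : ℝ) ≤ n := mod_cast hn
  have seven_le_log : 7 ≤ log n := by
    have exp_seven_le : Real.exp 7 ≤ 2.719 ^ 7 := by
      rw [show (7 : ℝ) = (7 : ℕ) * 1 by norm_num, Real.exp_nat_mul]
      gcongr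
      linarith [Real.exp_one_lt_d9]
    rw [Real.le_log_iff_exp_le (by positivity)]
    linarith
  have chebyshev_le : 0.9212 * (n - 29) - log n / 2 - 2 ≤ (π' n + 1) * log n := by
    calc 0.9212 * (n - 29 : ℝ) - log n / 2 - 2
        ≤ chebyshevConst * (n - 29) - log n / 2 - 2 := by
          gcongr
          · linarith
          · exact lt_chebyshevConst.le
      _ ≤ ψ n := chebyshevConst_mul_sub_le_psi (by omega)
      _ ≤ π n * log n := Chebyshev.psi_le_primeCounting_mul_log n
      _ ≤ (π' n + 1) * log n := by
          gcongr
          exact_mod_cast primeCounting_le_primeCounting'_add_one n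
  have le_sub : (0.76 : ℝ) * π' n + 3 ≤ π' n - π (π' n) := by
    have sieve : 210 ≤ sieveCount 37 1400 := by decide +kernel
    rw [sieveCount_eq_primeCounting' (by norm_num)] at sieve
    have primeCounting_le : (25 * π (π' n) + 75 : ℝ) ≤ 6 * π' n :=
      mod_cast mul_primeCounting_add_le_mul (sieve.trans (Nat.monotone_primeCounting' hn))
    linarith
  calc n * log 2 ≤ n * 0.6932 := by gcongr; linarith [Real.log_two_lt_d9]
    _ < (0.76 * π' n + 3) * log n := by linarith
    _ ≤ (π' n - π (π' n)) * log n := by gcongr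

theorem mul_log_two_lt {n : ℕ} (hn : 72 ≤ n) :
    n * log 2 < (π' n - π (π' n)) * log n :=
  (lt_or_ge n 1400).elim (mul_log_two_lt_of_lt hn) mul_log_two_lt_of_ge

/-- The bound on `r` is optimal: for `r = 19` the left side is `11` and the right side, with
`p_20 = 71`, exceeds `11.5`. -/
theorem stmt_7_general (r : ℕ) (hr : 20 ≤ r) :
    (r : ℝ) - (Nat.primeCounting r : ℝ) >
      ((Nat.nth Nat.Prime r : ℝ) / Real.log (Nat.nth Nat.Prime r)) * Real.log 2 := by
  have le_nth : 72 ≤ Nat.nth Nat.Prime r := by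
    have count_le : π' 72 ≤ 20 := by
      rw [← sieveCount_eq_primeCounting' (m := 37) (by norm_num)]
      decide +kernel
    exact (Nat.count_le_iff_le_nth Nat.infinite_setOfPred_prime).1 (count_le.trans hr)
  have log_nth_pos : 0 < log (Nat.nth Nat.Prime r) := Real.log_pos (by exact_mod_cast (by omega))
  have key := mul_log_two_lt le_nth
  rw [Nat.primeCounting'_nth_eq] at key
  rwa [gt_iff_lt, div_mul_eq_mul_div, div_lt_iff₀ log_nth_pos]

end

/-- For every integer r ≥ 55, r − π(r) > (p_{r+1} / log p_{r+1}) · log 2. -/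
theorem stmt_7 (r : ℕ) (hr : 55 ≤ r) :
    (r : ℝ) - (Nat.primeCounting r : ℝ) >
      ((Nat.nth Nat.Prime r : ℝ) / Real.log (Nat.nth Nat.Prime r)) * Real.log 2 :=
  stmt_7_general r (by omega)
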